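/- Let p ≥ 6, u = 2^(1−p), and let o_x, o_y ∈ [1, 1/(8u) − 2]. Let x_h, x_l, y_h, y_l ∈ F_p satisfy |x_l| ≤ o_x·u·|x_h| and |y_l| ≤ o_y·u·|y_h|. In any execution of sloppy double-word addition in faithful rounding, if |w| > |s_h| then x_h·y_h < 0 and max(|x_h|, |y_h|) ≤ 2·min(|x_h|, |y_h|) (the hypothesis of Sterbenz's lemma holds), and consequently s_h = x_h + y_h exactly and s_l = 0. -/

import Mathlib

/-!
If the hypothesis of Sterbenz's lemma fails, no heavy cancellation occurs in `xh + yh`: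
`|xh + yh| ≥ (|xh| + |yh|) / 3`. Every faithful rounding has relative error at most
`2 ^ (1 - p) ≤ 1/32` (`Faithful.abs_sub_le`), so crude error propagation gives, with
`N = |xh| + |yh|`, the bounds `|v| ≤ 0.13 N` (as `o_x u, o_y u ≤ 1/8`) and `|sl| ≤ 0.11 N`, hence
`|w| ≤ 0.25 N`, while `|sh| ≥ (31/32) (N/3) > 0.32 N`. This contradicts `|sh| < |w|`.

When the hypothesis of Sterbenz's lemma holds, `|xh + yh| ≤ min |xh| |yh|`, so `xh + yh` is a
floating-point number (`add_mem_Fp_of_abs_le`). Rounding fixes floating-point numbers, and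
therefore every operation of the 2Sum part is exact, with error term `sl = 0`.
-/

/-- The radix-2, precision-`p` floating-point numbers with unlimited exponent range. -/
def Fp (p : ℕ) : Set ℝ := {x : ℝ | ∃ M e : ℤ, |M| ≤ 2 ^ p - 1 ∧ x = (M : ℝ) * (2 : ℝ) ^ e}

/-- Round toward `-∞`: the largest floating-point number `≤ x`. -/
noncomputable def RD (p : ℕ) (x : ℝ) : ℝ := sSup {f : ℝ | f ∈ Fp p ∧ f ≤ x}

/-- Round toward `+∞`: the smallest floating-point number `≥ x`. -/
noncomputable def RU (p : ℕ) (x : ℝ) : ℝ := sInf {f : ℝ | f ∈ Fp p ∧ x ≤ f}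

/-- `y` is a faithful rounding of `x`. -/
def Faithful (p : ℕ) (x y : ℝ) : Prop := y = RD p x ∨ y = RU p x

/-- All hypotheses of one execution of the sloppy double-word addition algorithm
(`2Sum(x_h,y_h)`, `v = ∘(x_l+y_l)`, `w = ∘(s_l+v)`, `Fast2Sum(s_h,w)`) in faithful
rounding, each rounding chosen independently. -/
def SloppyFaithful (p : ℕ) (xh xl yh yl sh a' b' da db sl v w zh d zl : ℝ) : Prop :=
  Faithful p (xh + yh) sh ∧ Faithful p (sh - yh) a' ∧ Faithful p (sh - a') b' ∧
  Faithful p (xh - a') da ∧ Faithful p (yh - b') db ∧ Faithful p (da + db) sl ∧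
  Faithful p (xl + yl) v ∧ Faithful p (sl + v) w ∧
  Faithful p (sh + w) zh ∧ Faithful p (zh - sh) d ∧ Faithful p (w - d) zl

lemma Fp_mono {p q : ℕ} (h : p ≤ q) : Fp p ⊆ Fp q := by
  rintro x ⟨M, e, hM, rfl⟩
  have : (2 : ℤ) ^ p ≤ 2 ^ q := pow_le_pow_right₀ (by norm_num) h
  exact ⟨M, e, by linarith, rfl⟩

lemma neg_mem_Fp {p : ℕ} {x : ℝ} (h : x ∈ Fp p) : -x ∈ Fp p := by
  obtain ⟨M, e, hM, rfl⟩ := h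
  exact ⟨-M, e, by rwa [abs_neg], by push_cast; ring⟩

lemma zero_mem_Fp (p : ℕ) : (0 : ℝ) ∈ Fp p := by
  refine ⟨0, 0, ?_, by simp⟩
  have : (1 : ℤ) ≤ 2 ^ p := one_le_pow₀ (by norm_num)
  simpa using this

/-- A positive real is enclosed by two floating-point numbers at relative distance at most `1/32`.
Six bits of precision suffice for this: with `2 ^ e ≤ x < 2 ^ (e + 1)`, consecutive multiples of
`2 ^ (e - 5)` are taken. -/
lemma exists_bracket_pos {x : ℝ} (hx : 0 < x) :
    ∃ f ∈ Fp 6, ∃ g ∈ Fp 6, f ≤ x ∧ x ≤ g ∧ x - f ≤ x / 32 ∧ g - x ≤ x / 32 := by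
  obtain ⟨e, he1, he2⟩ := exists_mem_Ico_zpow hx (one_lt_two : (1 : ℝ) < 2)
  obtain ⟨c, hc⟩ : ∃ c : ℝ, c = (2 : ℝ) ^ (e - 5) := ⟨_, rfl⟩
  have hc0 : 0 < c := hc ▸ by positivity
  have hce : (2 : ℝ) ^ e = 32 * c := by
    rw [hc, zpow_sub₀ (by norm_num)]; norm_num; ring
  have hce' : (2 : ℝ) ^ (e + 1) = 64 * c := by
    rw [zpow_add_one₀ (by norm_num), hce]; ring
  rw [hce] at he1
  rw [hce'] at he2
  obtain ⟨M, hM⟩ : ∃ M : ℤ, M = ⌊x / c⌋ := ⟨_, rfl⟩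
  have h1 : (M : ℝ) * c ≤ x := by
    rw [← le_div_iff₀ hc0, hM]; exact Int.floor_le _
  have h2 : x < ((M : ℝ) + 1) * c := by
    rw [← div_lt_iff₀ hc0, hM]; exact Int.lt_floor_add_one _
  have hMlo : 32 ≤ M := by
    rw [hM, Int.le_floor, le_div_iff₀ hc0]; exact_mod_cast he1
  have hMhi : M < 64 := by
    rw [hM, Int.floor_lt, div_lt_iff₀ hc0]; exact_mod_cast he2
  refine ⟨M * c, ⟨M, e - 5, ?_, by rw [hc]⟩, (M + 1) * c, ?_, h1, h2.le, by linarith, by linarith⟩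
  · rw [abs_of_nonneg (by linarith)]; norm_num; lia
  · rcases (show M + 1 ≤ 63 ∨ M = 63 by lia) with h | h
    · refine ⟨M + 1, e - 5, ?_, by rw [hc]; push_cast; ring⟩
      rw [abs_of_nonneg (by linarith)]; norm_num; lia
    · -- The significand `64` overflows, but the upper neighbour is then a power of two.
      refine ⟨1, e + 1, by norm_num, ?_⟩
      rw [hce', h]; push_cast; ring

lemma exists_bracket {p : ℕ} (hp : 6 ≤ p) (x : ℝ) :
    ∃ f ∈ Fp p, ∃ g ∈ Fp p, f ≤ x ∧ x ≤ g ∧ x - f ≤ |x| / 32 ∧ g - x ≤ |x| / 32 := by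
  rcases lt_trichotomy x 0 with h | rfl | h
  · obtain ⟨f, hf, g, hg, h1, h2, h3, h4⟩ := exists_bracket_pos (neg_pos.2 h)
    rw [abs_of_neg h]
    exact ⟨-g, neg_mem_Fp (Fp_mono hp hg), -f, neg_mem_Fp (Fp_mono hp hf),
      by linarith, by linarith, by linarith, by linarith⟩
  · exact ⟨0, zero_mem_Fp p, 0, zero_mem_Fp p, by simp⟩
  · obtain ⟨f, hf, g, hg, h1, h2, h3, h4⟩ := exists_bracket_pos h
    rw [abs_of_pos h]
    exact ⟨f, Fp_mono hp hf, g, Fp_mono hp hg, h1, h2, h3, h4⟩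

/-- The relative error of faithful rounding in precision at least `6` is at most `1/32`. -/
lemma Faithful.abs_sub_le {p : ℕ} (hp : 6 ≤ p) {x y : ℝ} (h : Faithful p x y) :
    |y - x| ≤ |x| / 32 := by
  obtain ⟨f, hf, g, hg, h1, h2, h3, h4⟩ := exists_bracket hp x
  have hx := abs_nonneg x
  rcases h with rfl | rfl
  · have ha : f ≤ RD p x := le_csSup ⟨x, fun _ h => h.2⟩ ⟨hf, h1⟩
    have hb : RD p x ≤ x := csSup_le ⟨f, hf, h1⟩ fun _ h => h.2
    rw [abs_le]; constructor <;> linarith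
  · have ha : RU p x ≤ g := csInf_le ⟨x, fun _ h => h.2⟩ ⟨hg, h2⟩
    have hb : x ≤ RU p x := le_csInf ⟨g, hg, h2⟩ fun _ h => h.2
    rw [abs_le]; constructor <;> linarith

lemma Faithful.eq_of_mem {p : ℕ} {x y : ℝ} (h : Faithful p x y) (hx : x ∈ Fp p) : y = x := by
  rcases h with rfl | rfl
  · exact IsGreatest.csSup_eq ⟨⟨hx, le_rfl⟩, fun _ h => h.2⟩
  · exact IsLeast.csInf_eq ⟨⟨hx, le_rfl⟩, fun _ h => h.2⟩

/-- The sum is a multiple of the smaller of the two quanta, and it does not exceed in magnitude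
the operand having that quantum, so its significand fits. -/
lemma add_mem_Fp_of_abs_le {p : ℕ} {x y : ℝ} (hx : x ∈ Fp p) (hy : y ∈ Fp p)
    (h1 : |x + y| ≤ |x|) (h2 : |x + y| ≤ |y|) : x + y ∈ Fp p := by
  have key : ∀ (M e N k : ℤ), |M| ≤ 2 ^ p - 1 → e ≤ k →
      |(M : ℝ) * (2 : ℝ) ^ e + N * (2 : ℝ) ^ k| ≤ |(M : ℝ) * (2 : ℝ) ^ e| →
      (M : ℝ) * (2 : ℝ) ^ e + N * (2 : ℝ) ^ k ∈ Fp p := by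
    intro M e N k hM hek h
    obtain ⟨n, rfl⟩ := Int.le.dest hek
    have hs : (M : ℝ) * (2 : ℝ) ^ e + N * (2 : ℝ) ^ (e + n)
        = ((M + N * 2 ^ n : ℤ) : ℝ) * (2 : ℝ) ^ e := by
      rw [zpow_add₀ (by norm_num)]; push_cast [zpow_natCast]; ring
    rw [hs] at h ⊢
    rw [abs_mul, abs_mul] at h
    have h' := le_of_mul_le_mul_right h (abs_pos.2 (by positivity))
    exact ⟨_, e, le_trans (by exact_mod_cast h') hM, rfl⟩
  obtain ⟨M, e, hM, rfl⟩ := hx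
  obtain ⟨N, k, hN, rfl⟩ := hy
  rcases le_total e k with h | h
  · exact key M e N k hM h h1
  · rw [add_comm] at h2 ⊢
    exact key N k M e hN h h2

/-- Under the hypothesis of Sterbenz's lemma, the sum is dominated by both operands. -/
lemma abs_add_le_of_sterbenz {x y : ℝ} (hxy : x * y < 0)
    (h : max |x| |y| ≤ 2 * min |x| |y|) : |x + y| ≤ |x| ∧ |x + y| ≤ |y| := by
  have h1 := (le_max_left _ _).trans (h.trans
    (mul_le_mul_of_nonneg_left (min_le_right |x| |y|) (by norm_num)))
  have h2 := (le_max_right _ _).trans (h.trans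
    (mul_le_mul_of_nonneg_left (min_le_left |x| |y|) (by norm_num)))
  rcases mul_neg_iff.1 hxy with ⟨hx, hy⟩ | ⟨hx, hy⟩
  · rw [abs_of_pos hx, abs_of_neg hy] at *
    constructor <;> rw [abs_le] <;> constructor <;> linarith
  · rw [abs_of_neg hx, abs_of_pos hy] at *
    constructor <;> rw [abs_le] <;> constructor <;> linarith

/-- Without the hypothesis of Sterbenz's lemma, cancellation loses at most a factor `3`. -/
lemma abs_add_ge_of_not_sterbenz {x y : ℝ}
    (h : ¬ (x * y < 0 ∧ max |x| |y| ≤ 2 * min |x| |y|)) : |x| + |y| ≤ 3 * |x + y| := by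
  by_cases hxy : x * y < 0
  · have h' : 2 * min |x| |y| < max |x| |y| := not_le.1 fun h' => h ⟨hxy, h'⟩
    have h1 : |x| ≤ |x + y| + |y| := by simpa using abs_sub (x + y) y
    have h2 : |y| ≤ |x + y| + |x| := by simpa using abs_sub (x + y) x
    rcases le_total |x| |y| with h3 | h3
    · rw [min_eq_left h3, max_eq_right h3] at h'; linarith
    · rw [min_eq_right h3, max_eq_left h3] at h'; linarith
  · have : |x + y| = |x| + |y| := by
      rw [abs_add_eq_add_abs_iff]
      rcases mul_nonneg_iff.1 (not_lt.1 hxy) with h | h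
      · exact Or.inl h
      · exact Or.inr h
    have := abs_nonneg (x + y)
    linarith

lemma overlap_le {p : ℕ} {u o x l : ℝ} (hu : u = (2 : ℝ) ^ (1 - (p : ℤ)))
    (ho : o ≤ 1 / (8 * u) - 2) (h : |l| ≤ o * u * |x|) : |l| ≤ |x| / 8 := by
  have hu0 : 0 < u := hu ▸ by positivity
  have h1 : o * u ≤ 1 / 8 := by
    have := mul_le_mul_of_nonneg_right ho hu0.le
    have h2 : (1 / (8 * u) - 2) * u = 1 / 8 - 2 * u := by field_simp
    linarith
  have := mul_le_mul_of_nonneg_right h1 (abs_nonneg x)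
  linarith

theorem sloppy_sterbenz_of_w_gt_sh
    (p : ℕ) (hp : 6 ≤ p) (u : ℝ) (hu : u = (2 : ℝ) ^ (1 - (p : ℤ)))
    (ox oy : ℝ) (hox1 : 1 ≤ ox) (hox2 : ox ≤ 1 / (8 * u) - 2)
    (hoy1 : 1 ≤ oy) (hoy2 : oy ≤ 1 / (8 * u) - 2)
    (xh xl yh yl : ℝ)
    (hxh : xh ∈ Fp p) (hxl : xl ∈ Fp p) (hyh : yh ∈ Fp p) (hyl : yl ∈ Fp p)
    (hovx : |xl| ≤ ox * u * |xh|) (hovy : |yl| ≤ oy * u * |yh|)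
    (sh a' b' da db sl v w zh d zl : ℝ)
    (hrun : SloppyFaithful p xh xl yh yl sh a' b' da db sl v w zh d zl) :
    |sh| < |w| →
      xh * yh < 0 ∧ max |xh| |yh| ≤ 2 * min |xh| |yh| ∧ sh = xh + yh ∧ sl = 0 := by
  intro hw
  obtain ⟨hsh, ha, hb, hda, hdb, hsl, hv, hw', -, -, -⟩ := hrun
  have hst : xh * yh < 0 ∧ max |xh| |yh| ≤ 2 * min |xh| |yh| := by
    by_contra hcon
    have h3 := abs_add_ge_of_not_sterbenz hcon
    have hx8 := overlap_le hu hox2 hovx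
    have hy8 := overlap_le hu hoy2 hovy
    -- A faithful rounding `y` of `x` satisfies `|y| ≤ (33/32) |x|`.
    have mag : ∀ {x y : ℝ}, Faithful p x y → |y| ≤ 33 / 32 * |x| := by
      intro x y h
      have h1 := h.abs_sub_le hp
      have h2 := abs_sub_abs_le_abs_sub y x
      linarith
    have esh := hsh.abs_sub_le hp
    have ea := ha.abs_sub_le hp
    have eb := hb.abs_sub_le hp
    have mda := mag hda
    have mdb := mag hdb
    have msl := mag hsl
    have mv := mag hv
    have mw := mag hw'
    have tS := abs_add_le xh yh
    have tsh : |xh + yh| ≤ |sh| + |sh - (xh + yh)| := by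
      simpa using abs_sub sh (sh - (xh + yh))
    have t1 : |sh - yh| ≤ |xh| + |sh - (xh + yh)| := by
      have := abs_add_le xh (sh - (xh + yh))
      rwa [show xh + (sh - (xh + yh)) = sh - yh by ring] at this
    have t2 : |xh - a'| ≤ |sh - (xh + yh)| + |a' - (sh - yh)| := by
      have := abs_add_le (sh - (xh + yh)) (a' - (sh - yh))
      rwa [show sh - (xh + yh) + (a' - (sh - yh)) = -(xh - a') by ring, abs_neg] at this
    have t3 : |sh - a'| ≤ |yh| + |a' - (sh - yh)| := by
      have := abs_sub yh (a' - (sh - yh))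
      rwa [show yh - (a' - (sh - yh)) = sh - a' by ring] at this
    have t4 : |yh - b'| ≤ |a' - (sh - yh)| + |b' - (sh - a')| := by
      have := abs_sub (a' - (sh - yh)) (b' - (sh - a'))
      rwa [show a' - (sh - yh) - (b' - (sh - a')) = yh - b' by ring] at this
    have t5 := abs_add_le da db
    have t6 := abs_add_le xl yl
    have t7 := abs_add_le sl v
    have := abs_nonneg xh
    have := abs_nonneg yh
    linarith
  obtain ⟨h1, h2⟩ := hst
  obtain ⟨l1, l2⟩ := abs_add_le_of_sterbenz h1 h2
  have esh : sh = xh + yh := hsh.eq_of_mem (add_mem_Fp_of_abs_le hxh hyh l1 l2)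
  have ea : a' = xh := by
    rw [show sh - yh = xh by rw [esh]; ring] at ha
    exact ha.eq_of_mem hxh
  have eb : b' = yh := by
    rw [show sh - a' = yh by rw [esh, ea]; ring] at hb
    exact hb.eq_of_mem hyh
  have eda : da = 0 := by
    rw [ea, sub_self] at hda
    exact hda.eq_of_mem (zero_mem_Fp p)
  have edb : db = 0 := by
    rw [eb, sub_self] at hdb
    exact hdb.eq_of_mem (zero_mem_Fp p)
  refine ⟨h1, h2, esh, ?_⟩
  rw [eda, edb, add_zero] at hsl
  exact hsl.eq_of_mem (zero_mem_Fp p)
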